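/- Let S be a Γ-semiring with a left unity and a right unity, and let L be its left operator semiring. For every fuzzy ideal μ of L one has (μ⁺)⁺' = μ. -/

import Mathlib

/-!
Every `f ∈ L` is additive and satisfies `f(xγa) = f(x)γa`, i.e. `f ∘ ℓ(x,γ) = ℓ(f(x),γ)`. Hence
`(μ⁺)⁺'(f) = inf_{s,γ} μ(ℓ(f(s),γ)) = inf_{s,γ} μ(f ∘ ℓ(s,γ)) ≥ μ(f)` by the ideal property.
Conversely, a left unity `∑ᵢ eᵢδᵢa = a` gives `f = ∑ᵢ ℓ(f(eᵢ),δᵢ)`, and since `μ` of a finite sum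
is at least the minimum of the values of `μ` on the summands (`IsFuzzyIdealL.le_sum_ell`),
`μ(f) ≥ minᵢ μ(ℓ(f(eᵢ),δᵢ)) ≥ (μ⁺)⁺'(f)`.
-/

instance : Fact ((0:ℝ) ≤ 1) := ⟨zero_le_one⟩

/-- A `Γ`-semiring structure on additive commutative monoids `S` and `Γ`. -/
structure GammaSemiring (S Γ : Type*) [AddCommMonoid S] [AddCommMonoid Γ] where
  tmul : S → Γ → S → S
  add_left : ∀ (a b : S) (α : Γ) (c : S), tmul (a + b) α c = tmul a α c + tmul b α c
  add_right : ∀ (a : S) (α : Γ) (b c : S), tmul a α (b + c) = tmul a α b + tmul a α c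
  add_mid : ∀ (a : S) (α β : Γ) (b : S), tmul a (α + β) b = tmul a α b + tmul a β b
  tmul_assoc : ∀ (a : S) (α : Γ) (b : S) (β : Γ) (c : S),
    tmul a α (tmul b β c) = tmul (tmul a α b) β c
  zero_left : ∀ (α : Γ) (x : S), tmul 0 α x = 0
  zero_right : ∀ (x : S) (α : Γ), tmul x α 0 = 0
  zero_mid : ∀ (x y : S), tmul x 0 y = 0

namespace GammaSemiring

variable {S Γ : Type*} [AddCommMonoid S] [AddCommMonoid Γ]

/-- The left translation map `ℓ(x,α) : a ↦ xαa`. -/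
def ell (G : GammaSemiring S Γ) (x : S) (α : Γ) : S → S := fun a => G.tmul x α a

/-- Membership in the left operator semiring: the additive closure of the maps `ℓ(x,α)`. -/
inductive InL (G : GammaSemiring S Γ) : (S → S) → Prop
  | basic (x : S) (α : Γ) : InL G (G.ell x α)
  | add {f g : S → S} : InL G f → InL G g → InL G (f + g)

lemma inL_zero (G : GammaSemiring S Γ) : G.InL (0 : S → S) := by
  have h : G.ell (0 : S) (0 : Γ) = (0 : S → S) := funext fun a => G.zero_left 0 a
  exact h ▸ InL.basic 0 0

lemma InL.comp {G : GammaSemiring S Γ} {f g : S → S} (hf : G.InL f) (hg : G.InL g) :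
    G.InL (f ∘ g) := by
  induction hf with
  | basic x α =>
    induction hg with
    | basic y β =>
      have h : G.ell x α ∘ G.ell y β = G.ell (G.tmul x α y) β :=
        funext fun a => G.tmul_assoc x α y β a
      exact h ▸ InL.basic _ _
    | add hg₁ hg₂ ih₁ ih₂ =>
      rename_i g₁ g₂
      have h : G.ell x α ∘ (g₁ + g₂) = (G.ell x α ∘ g₁) + (G.ell x α ∘ g₂) :=
        funext fun a => G.add_right x α (g₁ a) (g₂ a)
      exact h ▸ InL.add ih₁ ih₂
  | add hf₁ hf₂ ih₁ ih₂ =>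
    rename_i f₁ f₂
    have h : (f₁ + f₂) ∘ g = (f₁ ∘ g) + (f₂ ∘ g) := rfl
    exact h ▸ InL.add ih₁ ih₂

/-- The left operator semiring `L` of a `Γ`-semiring, as a type: the subtype of
maps `S → S` belonging to the additive closure of the `ℓ(x,α)`. -/
def LOp (G : GammaSemiring S Γ) : Type _ := {f : S → S // G.InL f}

/-- The zero element of `L` is the zero map. -/
instance (G : GammaSemiring S Γ) : Zero G.LOp := ⟨⟨0, G.inL_zero⟩⟩

/-- Addition in `L` is pointwise addition of maps. -/
instance (G : GammaSemiring S Γ) : Add G.LOp := ⟨fun f g => ⟨f.1 + g.1, f.2.add g.2⟩⟩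

/-- Multiplication in `L` is composition of maps. -/
instance (G : GammaSemiring S Γ) : Mul G.LOp := ⟨fun f g => ⟨f.1 ∘ g.1, f.2.comp g.2⟩⟩

/-- `S` has a left unity `∑ᵢ [eᵢ, δᵢ]`, i.e. `∑ᵢ eᵢ δᵢ a = a` for all `a ∈ S`. -/
def HasLeftUnity (G : GammaSemiring S Γ) : Prop :=
  ∃ (n : ℕ) (e : Fin n → S) (δ : Fin n → Γ), ∀ a : S, ∑ i, G.tmul (e i) (δ i) a = a

/-- `S` has a right unity `∑ⱼ [γⱼ, fⱼ]`, i.e. `∑ⱼ a γⱼ fⱼ = a` for all `a ∈ S`. -/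
def HasRightUnity (G : GammaSemiring S Γ) : Prop :=
  ∃ (n : ℕ) (γ : Fin n → Γ) (f : Fin n → S), ∀ a : S, ∑ j, G.tmul a (γ j) (f j) = a

/-- A fuzzy ideal of the `Γ`-semiring `S`: a `[0,1]`-valued function with
`σ(0) = 1`, `σ(x+y) ≥ min(σ(x),σ(y))` and `σ(xγy) ≥ max(σ(x),σ(y))`. -/
def IsFuzzyIdeal (G : GammaSemiring S Γ) (sigma : S → unitInterval) : Prop :=
  sigma 0 = 1 ∧ (∀ x y : S, min (sigma x) (sigma y) ≤ sigma (x + y)) ∧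
    ∀ (x : S) (γ : Γ) (y : S), max (sigma x) (sigma y) ≤ sigma (G.tmul x γ y)

/-- A fuzzy ideal of the left operator semiring `L`. -/
def IsFuzzyIdealL (G : GammaSemiring S Γ) (mu : G.LOp → unitInterval) : Prop :=
  mu 0 = 1 ∧ (∀ f g : G.LOp, min (mu f) (mu g) ≤ mu (f + g)) ∧
    ∀ f g : G.LOp, max (mu f) (mu g) ≤ mu (f * g)

/-- A fuzzy subset is non-constant if it takes at least two distinct values. -/
def NonConstant {X : Type*} (mu : X → unitInterval) : Prop := ∃ a b : X, mu a ≠ mu b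

/-- `μ⁺(x) = inf_{γ ∈ Γ} μ(ℓ(x,γ))` for a fuzzy subset `μ` of `L`. -/
noncomputable def plus (G : GammaSemiring S Γ) (mu : G.LOp → unitInterval) :
    S → unitInterval :=
  fun x => ⨅ γ : Γ, mu ⟨G.ell x γ, InL.basic x γ⟩

/-- `σ⁺'(f) = inf_{s ∈ S} σ(f(s))` for a fuzzy subset `σ` of `S`. -/
noncomputable def plusPrime (G : GammaSemiring S Γ) (sigma : S → unitInterval) :
    G.LOp → unitInterval :=
  fun f => ⨅ s : S, sigma (f.1 s)

/-- The sum `μ₁ ⊕ μ₂` of two fuzzy subsets: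
`(μ₁ ⊕ μ₂)(x) = sup { min(μ₁(u), μ₂(v)) : u + v = x }`. -/
noncomputable def fuzzySum {X : Type*} [Add X] (mu₁ mu₂ : X → unitInterval) :
    X → unitInterval :=
  fun x => sSup {r : unitInterval | ∃ u v : X, u + v = x ∧ r = min (mu₁ u) (mu₂ v)}

end GammaSemiring
namespace GammaSemiring

variable {S Γ : Type*} [AddCommMonoid S] [AddCommMonoid Γ]

/-- An ideal of the `Γ`-semiring `S`: a nonempty subset closed under addition and under
multiplication by elements of `S` on either side. -/
def IsIdeal (G : GammaSemiring S Γ) (A : Set S) : Prop :=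
  A.Nonempty ∧ (∀ a ∈ A, ∀ b ∈ A, a + b ∈ A) ∧
    ∀ a ∈ A, ∀ (x : S) (γ : Γ), G.tmul x γ a ∈ A ∧ G.tmul a γ x ∈ A

/-- An ideal of the left operator semiring `L`. -/
def IsIdealL (G : GammaSemiring S Γ) (J : Set G.LOp) : Prop :=
  J.Nonempty ∧ (∀ f ∈ J, ∀ g ∈ J, f + g ∈ J) ∧
    ∀ f ∈ J, ∀ g : G.LOp, f * g ∈ J ∧ g * f ∈ J

/-- `I⁺' = { f ∈ L : f(s) ∈ I for all s ∈ S }` for a subset `I` of `S`. -/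
def idealPlusPrime (G : GammaSemiring S Γ) (A : Set S) : Set G.LOp :=
  {f : G.LOp | ∀ s : S, f.1 s ∈ A}

/-- `J⁺ = { a ∈ S : ℓ(a,γ) ∈ J for all γ ∈ Γ }` for a subset `J` of `L`. -/
def idealPlus (G : GammaSemiring S Γ) (J : Set G.LOp) : Set S :=
  {a : S | ∀ γ : Γ, (⟨G.ell a γ, InL.basic a γ⟩ : G.LOp) ∈ J}

/-- `S` is zero-divisor free: `aαb = 0` implies `a = 0` or `α = 0` or `b = 0`. -/
def ZDF (G : GammaSemiring S Γ) : Prop :=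
  ∀ (a : S) (α : Γ) (b : S), G.tmul a α b = 0 → a = 0 ∨ α = 0 ∨ b = 0

/-- `S` is a commutative `Γ`-semiring: `aαb = bαa`. -/
def IsCommutative (G : GammaSemiring S Γ) : Prop :=
  ∀ (a : S) (α : Γ) (b : S), G.tmul a α b = G.tmul b α a

/-- A commutative `Γ`-semiring `S` is a `Γ`-semifield if for all `a ≠ 0` and `α ≠ 0` there
are `b ∈ S`, `β ∈ Γ` with `aαbβd = d` for all `d ∈ S`. -/
def IsGammaSemifield (G : GammaSemiring S Γ) : Prop :=
  G.IsCommutative ∧ ∀ a : S, a ≠ 0 → ∀ α : Γ, α ≠ 0 →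
    ∃ (b : S) (β : Γ), ∀ d : S, G.tmul (G.tmul a α b) β d = d

/-- The `Γₙ`-semiring product on `n × n` matrices:
`(A Δ B) i j = ∑ t ∑ k, (A i t) (Δ t k) (B k j)`. -/
def matTmul (G : GammaSemiring S Γ) {n : ℕ} (A : Matrix (Fin n) (Fin n) S)
    (D : Matrix (Fin n) (Fin n) Γ) (B : Matrix (Fin n) (Fin n) S) :
    Matrix (Fin n) (Fin n) S :=
  Matrix.of fun i j => ∑ t, ∑ k, G.tmul (A i t) (D t k) (B k j)

/-- A fuzzy ideal of the matrix `Γₙ`-semiring `Sₙ`, defined in the same way as for `S`,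
with `Sₙ`, `Γₙ` in place of `S`, `Γ`. -/
def IsFuzzyIdealMatrix (G : GammaSemiring S Γ) {n : ℕ}
    (mu : Matrix (Fin n) (Fin n) S → unitInterval) : Prop :=
  mu 0 = 1 ∧ (∀ A B : Matrix (Fin n) (Fin n) S, min (mu A) (mu B) ≤ mu (A + B)) ∧
    ∀ (A : Matrix (Fin n) (Fin n) S) (D : Matrix (Fin n) (Fin n) Γ)
      (B : Matrix (Fin n) (Fin n) S), max (mu A) (mu B) ≤ mu (G.matTmul A D B)

end GammaSemiring

open Classical in
/-- The characteristic function of a subset, as a fuzzy subset. -/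
noncomputable def fuzzyIndicator {X : Type*} (A : Set X) : X → unitInterval :=
  fun x => if x ∈ A then 1 else 0

/-- `μₙ`, the fuzzy subset of `Sₙ` induced by a fuzzy subset `μ` of `S`:
`μₙ(A) = min { μ(Aᵢⱼ) : 1 ≤ i,j ≤ n }`. -/
noncomputable def matFuzzy {S : Type*} {n : ℕ} (mu : S → unitInterval) :
    Matrix (Fin n) (Fin n) S → unitInterval :=
  fun A => ⨅ i, ⨅ j, mu (A i j)

namespace GammaSemiring

variable {S Γ : Type*} [AddCommMonoid S] [AddCommMonoid Γ]

lemma InL.map_zero {G : GammaSemiring S Γ} {f : S → S} (hf : G.InL f) : f 0 = 0 := by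
  induction hf with
  | basic x α => exact G.zero_right x α
  | add _ _ ih₁ ih₂ => rw [Pi.add_apply, ih₁, ih₂, add_zero]

lemma InL.map_add {G : GammaSemiring S Γ} {f : S → S} (hf : G.InL f) (a b : S) :
    f (a + b) = f a + f b := by
  induction hf with
  | basic x α => exact G.add_right x α a b
  | add _ _ ih₁ ih₂ => simp only [Pi.add_apply, ih₁, ih₂, add_add_add_comm]

lemma InL.map_tmul {G : GammaSemiring S Γ} {f : S → S} (hf : G.InL f) (x : S) (γ : Γ) (a : S) :
    f (G.tmul x γ a) = G.tmul (f x) γ a := by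
  induction hf with
  | basic y α => exact G.tmul_assoc y α x γ a
  | add _ _ ih₁ ih₂ => simp only [Pi.add_apply, ih₁, ih₂, G.add_left]

lemma InL.map_sum {G : GammaSemiring S Γ} {f : S → S} (hf : G.InL f) {ι : Type*}
    (t : Finset ι) (u : ι → S) : f (∑ i ∈ t, u i) = ∑ i ∈ t, f (u i) :=
  _root_.map_sum (⟨⟨f, hf.map_zero⟩, hf.map_add⟩ : S →+ S) u t

/-- A lower bound for `μ` on finitely many maps `ℓ(xᵢ,δᵢ)` is a lower bound for `μ` on their sum.
The sum is described by its values because `L` carries no bundled monoid structure; the empty sum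
is covered by `μ(0) = 1`. -/
lemma IsFuzzyIdealL.le_sum_ell {G : GammaSemiring S Γ} {mu : G.LOp → unitInterval}
    (hmu : G.IsFuzzyIdealL mu) {ι : Type*} (x : ι → S) (δ : ι → Γ) (c : unitInterval)
    (hc : ∀ i, c ≤ mu ⟨G.ell (x i) (δ i), InL.basic _ _⟩) (t : Finset ι) :
    ∃ h : G.LOp, (∀ a, h.1 a = ∑ i ∈ t, G.tmul (x i) (δ i) a) ∧ c ≤ mu h := by
  classical
  induction t using Finset.induction_on with
  | empty => exact ⟨0, fun a => rfl, hmu.1 ▸ unitInterval.le_one'⟩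
  | insert i t hi ih =>
    obtain ⟨h, hh, hle⟩ := ih
    refine ⟨⟨G.ell (x i) (δ i), InL.basic _ _⟩ + h, fun a => ?_,
      (le_min (hc i) hle).trans (hmu.2.1 _ _)⟩
    rw [Finset.sum_insert hi, ← hh a]
    rfl

end GammaSemiring

variable {S Γ : Type*} [AddCommMonoid S] [AddCommMonoid Γ]

/-- For every fuzzy ideal `μ` of `L` one has `(μ⁺)⁺' = μ`. -/
theorem plusPrime_plus_eq (G : GammaSemiring S Γ)
    (hLU : G.HasLeftUnity) (hRU : G.HasRightUnity)
    (mu : G.LOp → unitInterval) (hmu : G.IsFuzzyIdealL mu) :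
    G.plusPrime (G.plus mu) = mu := by
  funext f
  apply le_antisymm
  · obtain ⟨n, e, δ, he⟩ := hLU
    obtain ⟨h, hh, hle⟩ := hmu.le_sum_ell (fun i => f.1 (e i)) δ (G.plusPrime (G.plus mu) f)
      (fun i => (iInf_le _ (e i)).trans (iInf_le _ (δ i))) Finset.univ
    have hf : h = f := by
      refine Subtype.ext (funext fun a => ?_)
      rw [hh a]
      conv_rhs => rw [← he a, f.2.map_sum]
      exact Finset.sum_congr rfl fun i _ => (f.2.map_tmul _ _ _).symm
    exact hf ▸ hle
  · refine le_iInf fun s => le_iInf fun γ => ?_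
    have hf : (⟨G.ell (f.1 s) γ, .basic _ _⟩ : G.LOp) = f * ⟨G.ell s γ, .basic _ _⟩ :=
      Subtype.ext (funext fun a => (f.2.map_tmul s γ a).symm)
    rw [hf]
    exact (le_max_left _ _).trans (hmu.2.2 _ _)
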